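/- arXiv:2411.11261 — 2 statements merged into one kernel-verified Lean document; each statement's English description precedes it below -/
import Mathlib

section
/- The set {(u,v) ∈ ℝ² : exp(u·e₁ + v·e₄) ∈ Δ}, where exp denotes the componentwise matrix exponential in SU(2)×SU(2)×SU(2) and Δ = {(g,g,g) : g ∈ SU(2)}, equals the lattice Γ = {m·(2π/√3, 2π) + n·(4π/√3, 0) : m, n ∈ ℤ}. (Consequently the totally geodesic J-holomorphic torus in nearly Kähler S³×S³ is isometric to ℝ²/Γ.) -/
/-!
All three components of `u • e1 + v • e4` are real multiples of `Hm = diag(i, -i)`, with coefficients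
`a = u/√12 + v/2`, `b = -2u/√12`, `c = u/√12 - v/2`. Since `exp (t Hm) = diag(e^{it}, e^{-it})`
lies in `SU(2)` (`matExp_smul_Hm`, `memSU2_rot`), the triple is in the diagonal iff `a`, `b`, `c`
agree modulo `2π` (`rot_eq_iff`), that is, iff `a - c = v = 2πk` and `a - b = (√3 u + v)/2 = 2πl`
for integers `k`, `l`. Substituting `m = k`, `n = l - k` gives the lattice.
-/

/- Setup: `𝔤 = 𝔰𝔲(2)³`, the Lie algebra of `SU(2)×SU(2)×SU(2)`, with
`e₁ = (1/√12)(H,−2H,H)` and `e₄ = (1/2)(H,0,−H)`; `Δ = {(g,g,g) : g ∈ SU(2)}`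
is the isotropy group of the base point of `S³×S³ = SU(2)³/ΔSU(2)`. -/

noncomputable section
open Matrix

abbrev M2 := Matrix (Fin 2) (Fin 2) ℂ
abbrev T3 := M2 × M2 × M2

def Hm : M2 := !![Complex.I, 0; 0, -Complex.I]

def e1 : T3 := (Real.sqrt 12)⁻¹ • ((Hm, -(2 : ℝ) • Hm, Hm) : T3)
def e4 : T3 := (2 : ℝ)⁻¹ • ((Hm, 0, -Hm) : T3)

/-- the matrix exponential `exp A = ∑ Aⁿ/n!`. -/
def matExp (A : M2) : M2 := ∑' n : ℕ, ((n.factorial : ℝ)⁻¹) • A ^ n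

/-- the componentwise matrix exponential on `SU(2)×SU(2)×SU(2)`. -/
def expTriple (W : T3) : T3 := (matExp W.1, matExp W.2.1, matExp W.2.2)

/-- membership in `SU(2)`. -/
def memSU2 (g : M2) : Prop := star g * g = 1 ∧ g.det = 1

/-- the lattice `Γ = ℤ·(2π/√3, 2π) + ℤ·(4π/√3, 0)` in `ℝ²`. -/
def latticeG : Set (ℝ × ℝ) :=
  {w | ∃ m n : ℤ, w = m • ((2 * Real.pi / Real.sqrt 3, 2 * Real.pi) : ℝ × ℝ)
      + n • ((4 * Real.pi / Real.sqrt 3, 0) : ℝ × ℝ)}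

/-- The element `diag(e^{it}, e^{-it})` of the maximal torus of `SU(2)` generated by `Hm`. -/
def rot (t : ℝ) : M2 :=
  diagonal ![Complex.exp (t * Complex.I), Complex.exp (-(t * Complex.I))]

lemma smul_Hm (t : ℝ) : t • Hm = diagonal ![t * Complex.I, -(t * Complex.I)] := by
  ext i j
  fin_cases i <;> fin_cases j <;> simp [Hm]

lemma matExp_smul_Hm (t : ℝ) : matExp (t • Hm) = rot t := by
  have hasSum_exp (z : ℂ) :
      HasSum (fun n : ℕ => ((n.factorial : ℝ)⁻¹) • z ^ n) (Complex.exp z) := by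
    rw [Complex.exp_eq_exp_ℂ]
    exact NormedSpace.exp_series_hasSum_exp' (𝕂 := ℝ) z
  have h : HasSum (fun n : ℕ =>
      ((n.factorial : ℝ)⁻¹) • (![t * Complex.I, -(t * Complex.I)] : Fin 2 → ℂ) ^ n)
      ![Complex.exp (t * Complex.I), Complex.exp (-(t * Complex.I))] := by
    rw [Pi.hasSum]
    intro i
    fin_cases i
    · exact hasSum_exp _
    · exact hasSum_exp _
  rw [matExp, smul_Hm, rot, ← h.matrix_diagonal.tsum_eq]
  simp only [diagonal_pow, diagonal_smul]

lemma memSU2_rot (t : ℝ) : memSU2 (rot t) := by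
  constructor
  · rw [rot, star_eq_conjTranspose, diagonal_conjTranspose, diagonal_mul_diagonal,
      ← diagonal_one]
    congr 1
    funext i
    fin_cases i <;> simp [← Complex.exp_conj, ← Complex.exp_add]
  · simp [rot, ← Complex.exp_add]

lemma rot_eq_iff (s t : ℝ) : rot s = rot t ↔ ∃ k : ℤ, s - t = 2 * Real.pi * k := by
  have h : Complex.exp (s * Complex.I) = Complex.exp (t * Complex.I) ↔
      ∃ k : ℤ, s - t = 2 * Real.pi * k := by
    rw [Complex.exp_eq_exp_iff_exists_int]
    refine exists_congr fun k => ?_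
    constructor
    · intro h
      have := congrArg Complex.im h
      simp at this
      linarith
    · intro h
      have h' : (s : ℂ) = t + 2 * Real.pi * k := by
        exact_mod_cast (by linarith : s = t + 2 * Real.pi * k)
      rw [h']
      ring
  rw [← h, rot, rot, diagonal_injective.eq_iff]
  constructor
  · intro h
    exact congrFun h 0
  · intro h
    simp [Complex.exp_neg, h]

lemma expTriple_orbit (u v : ℝ) : expTriple (u • e1 + v • e4) =
    (rot (u / √12 + v / 2), rot (-(2 * u / √12)), rot (u / √12 - v / 2)) := by
  simp only [← matExp_smul_Hm, expTriple, e1, e4, Prod.fst_add, Prod.snd_add, Prod.smul_fst,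
    Prod.smul_snd]
  refine Prod.ext ?_ (Prod.ext ?_ ?_)
  · exact congrArg matExp (by module)
  · exact congrArg matExp (by module)
  · exact congrArg matExp (by module)

/-- `exp(u·e₁ + v·e₄)` lies in the diagonal
`Δ = ΔSU(2)` exactly for `(u,v)` in the lattice `Γ`; hence the totally
geodesic `J`-holomorphic torus of nearly Kähler `S³×S³` is isometric to
`ℝ²/Γ`. -/
theorem torus_lattice_S3S3 :
    {w : ℝ × ℝ | ∃ g : M2, memSU2 g ∧ expTriple (w.1 • e1 + w.2 • e4) = (g, g, g)}
      = latticeG := by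
  have h3 : √3 ≠ 0 := by positivity
  have hsq : √3 * √3 = 3 := Real.mul_self_sqrt (by norm_num)
  have h12 : √12 = 2 * √3 := by
    rw [show (12 : ℝ) = 2 ^ 2 * 3 by norm_num, Real.sqrt_mul (by norm_num),
      Real.sqrt_sq (by norm_num)]
  ext ⟨u, v⟩
  have hab : u / √12 + v / 2 - -(2 * u / √12) = (√3 * u + v) / 2 := by
    rw [h12]
    field_simp
    linear_combination -u * hsq
  have hdiag : (∃ g : M2, memSU2 g ∧ expTriple (u • e1 + v • e4) = (g, g, g)) ↔
      (∃ l : ℤ, (√3 * u + v) / 2 = 2 * Real.pi * l) ∧ ∃ k : ℤ, v = 2 * Real.pi * k := by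
    have hac : (∃ k : ℤ, v = 2 * Real.pi * k) ↔
        rot (u / √12 + v / 2) = rot (u / √12 - v / 2) := by
      rw [rot_eq_iff, show u / √12 + v / 2 - (u / √12 - v / 2) = v by ring]
    rw [expTriple_orbit, ← hab, ← rot_eq_iff, hac]
    constructor
    · rintro ⟨g, -, h⟩
      simp only [Prod.mk.injEq] at h
      obtain ⟨ha, hb, hc⟩ := h
      exact ⟨ha.trans hb.symm, ha.trans hc.symm⟩
    · rintro ⟨hb, hc⟩
      exact ⟨_, memSU2_rot _, by rw [← hb, ← hc]⟩
  simp only [Set.mem_ofPred_eq, latticeG]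
  rw [hdiag]
  simp only [Prod.smul_mk, Prod.mk_add_mk, Prod.mk.injEq, zsmul_eq_mul, mul_zero, add_zero]
  constructor
  · rintro ⟨⟨l, hl⟩, k, hk⟩
    refine ⟨k, l - k, ?_, by rw [hk]; ring⟩
    push_cast
    field_simp
    linarith
  · rintro ⟨m, n, hu, hv⟩
    refine ⟨⟨m + n, ?_⟩, m, by rw [hv]; ring⟩
    rw [hu, hv]
    push_cast
    field_simp
    ring

end
end

section
/- There is no 2-dimensional subspace 𝔴 ⊆ 𝔭₁ = span{e₁, e₂, e₃} such that D_X Y ∈ 𝔴 for all X, Y ∈ 𝔴; equivalently, since D restricted to 𝔭₁ corresponds to the Lie bracket of 𝔰𝔲(2), the Lie algebra 𝔰𝔲(2) admits no 2-dimensional Lie subalgebra. (Hence no totally geodesic 2-sphere inside the fiber S³ of S³×S³ → S³ is D-invariant, although each such sphere is extrinsically homogeneous; this provides a counterexample to Proposition 2 of Alekseevsky–Nikonorov.) -/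
/-!
In the coordinates `u ↦ u₀ H + u₁ E + u₂ F` the bracket of `𝔰𝔲(2)` is `-2` times the cross
product of `ℝ³`, and in the coordinates `u ↦ u₀ e₁ + u₁ e₂ + u₂ e₃` the tensor `D` on `𝔭₁` is
`1/√12` times the cross product. For the latter, a bracket of two elements of `𝔭₁` has the shape
`(M, 4M, M)`, which splits as `(2M, 2M, 2M) + (-M, 2M, -M)` along `𝔨 ⊕ 𝔭`; the `𝔭`-part is
determined by the decomposition because the sum of the three components vanishes on `𝔭` and
is injective on `𝔨`.

A plane in `ℝ³` is never closed under the cross product: for a basis `u, v` of such a plane,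
`u × v` would be a combination of `u` and `v` orthogonal to both, hence zero, contradicting
linear independence. `no_plane_of_cross` transports this along any injective linear
coordinate map, which gives both halves of the theorem.
-/

/- Setup: the homogeneous nearly Kähler S³×S³ = SU(2)³/ΔSU(2). -/

noncomputable section
open Matrix

def Em : M2 := !![0, -1; 1, 0]
def Fm : M2 := !![0, Complex.I; Complex.I, 0]

def e2 : T3 := (Real.sqrt 12)⁻¹ • ((Em, -(2 : ℝ) • Em, Em) : T3)
def e3 : T3 := (Real.sqrt 12)⁻¹ • ((Fm, -(2 : ℝ) • Fm, Fm) : T3)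
def e5 : T3 := (2 : ℝ)⁻¹ • ((Em, 0, -Em) : T3)
def e6 : T3 := (2 : ℝ)⁻¹ • ((Fm, 0, -Fm) : T3)

/-- `𝔨 = Δ𝔰𝔲(2)`. -/
def kAlg : Submodule ℝ T3 :=
  Submodule.span ℝ {((Hm, Hm, Hm) : T3), ((Em, Em, Em) : T3), ((Fm, Fm, Fm) : T3)}

/-- `𝔭`, the orthogonal complement of `𝔨` in `𝔤`. -/
def pAlg : Submodule ℝ T3 := Submodule.span ℝ {e1, e2, e3, e4, e5, e6}

/-- `𝔤 = 𝔨 ⊕ 𝔭`. -/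
def gAlg : Submodule ℝ T3 := kAlg ⊔ pAlg

/-- vertical submodule `𝔭₁ = span{e₁,e₂,e₃}`. -/
def p1 : Submodule ℝ T3 := Submodule.span ℝ {e1, e2, e3}

/-- horizontal submodule `𝔭₂ = span{e₄,e₅,e₆}`. -/
def p2 : Submodule ℝ T3 := Submodule.span ℝ {e4, e5, e6}

/-- difference tensor `D_X Y = (1/2)[X,Y]_𝔭`. -/
def Dmap (πp : T3 → T3) (X Y : T3) : T3 := (2 : ℝ)⁻¹ • πp ⁅X, Y⁆

/-- curvature tensor
`R(X,Y)Z = D_X D_Y Z − D_Y D_X Z − [[X,Y]_𝔨, Z] − D_{[X,Y]_𝔭} Z`. -/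
def Rmap (πk πp : T3 → T3) (X Y Z : T3) : T3 :=
  Dmap πp X (Dmap πp Y Z) - Dmap πp Y (Dmap πp X Z) - ⁅πk ⁅X, Y⁆, Z⁆
    - Dmap πp (πp ⁅X, Y⁆) Z

/-- covariant derivative of the curvature,
`(∇_V R)(X,Y,Z) = D_V(R(X,Y)Z) − R(D_V X,Y)Z − R(X,D_V Y)Z − R(X,Y)(D_V Z)`. -/
def nablaR (πk πp : T3 → T3) (V X Y Z : T3) : T3 :=
  Dmap πp V (Rmap πk πp X Y Z) - Rmap πk πp (Dmap πp V X) Y Z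
    - Rmap πk πp X (Dmap πp V Y) Z - Rmap πk πp X Y (Dmap πp V Z)

/-- `𝔰𝔲(2) = span{H,E,F} ⊆ Mat₂(ℂ)`. -/
def su2 : Submodule ℝ M2 := Submodule.span ℝ {Hm, Em, Fm}

/-- The coordinates `u ↦ u₀ H + u₁ E + u₂ F` on `𝔰𝔲(2)`. -/
def suCoord : (Fin 3 → ℝ) →ₗ[ℝ] M2 := Fintype.linearCombination ℝ ![Hm, Em, Fm]

/-- The coordinates `u ↦ u₀ e₁ + u₁ e₂ + u₂ e₃` on `𝔭₁`. -/
def fiberCoord : (Fin 3 → ℝ) →ₗ[ℝ] T3 := Fintype.linearCombination ℝ ![e1, e2, e3]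

theorem suCoord_apply (u : Fin 3 → ℝ) :
    suCoord u = u 0 • Hm + u 1 • Em + u 2 • Fm := by
  simp [suCoord, Fintype.linearCombination_apply, Fin.sum_univ_three]

theorem fiberCoord_apply (u : Fin 3 → ℝ) :
    fiberCoord u = (Real.sqrt 12)⁻¹ • ((suCoord u, -(2 : ℝ) • suCoord u, suCoord u) : T3) := by
  simp only [fiberCoord, Fintype.linearCombination_apply, Fin.sum_univ_three, suCoord_apply,
    e1, e2, e3, Matrix.cons_val]
  refine Prod.ext ?_ (Prod.ext ?_ ?_) <;> simp only [Prod.smul_fst, Prod.smul_snd, Prod.fst_add, Prod.snd_add] <;> module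

theorem su2_eq_range : su2 = LinearMap.range suCoord := by
  rw [suCoord, Fintype.range_linearCombination, su2]
  congr 1
  ext x
  simp [or_comm, or_left_comm]

theorem p1_eq_range : p1 = LinearMap.range fiberCoord := by
  rw [fiberCoord, Fintype.range_linearCombination, p1]
  congr 1
  ext x
  simp [or_comm, or_left_comm]

theorem suCoord_injective : Function.Injective suCoord := by
  rw [injective_iff_map_eq_zero]
  intro u hu
  rw [suCoord_apply] at hu
  have h00 := congrFun (congrFun hu 0) 0
  have h10 := congrFun (congrFun hu 1) 0
  simp [Hm, Em, Fm, Complex.ext_iff] at h00 h10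
  ext i
  fin_cases i
  · exact h00
  · exact h10.1
  · exact h10.2

theorem fiberCoord_injective : Function.Injective fiberCoord := by
  intro u v h
  rw [fiberCoord_apply, fiberCoord_apply] at h
  have h12 : (Real.sqrt 12)⁻¹ ≠ 0 := by positivity
  exact suCoord_injective (Prod.ext_iff.1 (smul_right_injective T3 h12 h)).1

theorem lie_suCoord (u v : Fin 3 → ℝ) :
    ⁅suCoord u, suCoord v⁆ = (-2 : ℝ) • suCoord (crossProduct u v) := by
  simp only [suCoord_apply, Ring.lie_def]
  ext i j
  fin_cases i <;> fin_cases j <;> apply Complex.ext <;>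
    simp [Hm, Em, Fm, cross_apply] <;> ring

theorem lie_fiberCoord (u v : Fin 3 → ℝ) :
    ⁅fiberCoord u, fiberCoord v⁆ = (-(1 / 6) : ℝ) • ((suCoord (crossProduct u v),
      (4 : ℝ) • suCoord (crossProduct u v), suCoord (crossProduct u v)) : T3) := by
  have h12 : (Real.sqrt 12)⁻¹ * (Real.sqrt 12)⁻¹ = 1 / 12 := by
    rw [← mul_inv, Real.mul_self_sqrt (by norm_num)]; norm_num
  have key : ⁅fiberCoord u, fiberCoord v⁆ = ((1 / 12 : ℝ)) • ((⁅suCoord u, suCoord v⁆,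
      (4 : ℝ) • ⁅suCoord u, suCoord v⁆, ⁅suCoord u, suCoord v⁆) : T3) := by
    have hc (t : ℝ) (A B : M2) : ⁅(Real.sqrt 12)⁻¹ • t • A, (Real.sqrt 12)⁻¹ • t • B⁆
        = (1 / 12 * (t * t) : ℝ) • ⁅A, B⁆ := by
      have h : (Real.sqrt 12)⁻¹ * t * ((Real.sqrt 12)⁻¹ * t) = 1 / 12 * (t * t) := by
        rw [← h12]; ring
      rw [smul_smul, smul_smul, Ring.lie_def, Ring.lie_def, smul_mul_smul_comm,
        smul_mul_smul_comm, h, smul_sub]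
    have h1 := hc 1 (suCoord u) (suCoord v)
    have h2 := hc (-2) (suCoord u) (suCoord v)
    rw [one_smul, one_smul, mul_one, mul_one] at h1
    rw [fiberCoord_apply, fiberCoord_apply]
    refine Prod.ext h1 (Prod.ext (h2.trans ?_) h1)
    simp only [Prod.smul_fst, Prod.smul_snd]
    module
  rw [key, lie_suCoord]
  refine Prod.ext ?_ (Prod.ext ?_ ?_) <;> simp only [Prod.smul_fst, Prod.smul_snd] <;> module

theorem kAlg_components {Z : T3} (hZ : Z ∈ kAlg) : Z.2.1 = Z.1 ∧ Z.2.2 = Z.1 := by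
  induction hZ using Submodule.span_induction with
  | mem x hx => rcases hx with rfl | rfl | rfl <;> exact ⟨rfl, rfl⟩
  | zero => exact ⟨rfl, rfl⟩
  | add x y _ _ hx hy => simp [hx.1, hx.2, hy.1, hy.2]
  | smul a x _ hx => simp [hx.1, hx.2]

theorem pAlg_component_sum {Z : T3} (hZ : Z ∈ pAlg) : Z.1 + Z.2.1 + Z.2.2 = 0 := by
  induction hZ using Submodule.span_induction with
  | mem x hx =>
    rcases hx with rfl | rfl | rfl | rfl | rfl | rfl <;>
      simp only [e1, e2, e3, e4, e5, e6, Prod.smul_fst, Prod.smul_snd] <;> module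
  | zero => simp
  | add x y _ _ hx hy =>
    have : (x + y).1 + (x + y).2.1 + (x + y).2.2
      = (x.1 + x.2.1 + x.2.2) + (y.1 + y.2.1 + y.2.2) := by
      simp only [Prod.fst_add, Prod.snd_add]; abel
    rw [this, hx, hy, add_zero]
  | smul a x _ hx =>
    simp only [Prod.smul_fst, Prod.smul_snd, ← smul_add, hx, smul_zero]

theorem diag_mem_kAlg (u : Fin 3 → ℝ) :
    ((suCoord u, suCoord u, suCoord u) : T3) ∈ kAlg := by
  have h : ((suCoord u, suCoord u, suCoord u) : T3) = u 0 • ((Hm, Hm, Hm) : T3)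
      + u 1 • ((Em, Em, Em) : T3) + u 2 • ((Fm, Fm, Fm) : T3) := by
    simp [suCoord_apply]
  rw [h, kAlg]
  refine add_mem (add_mem ?_ ?_) ?_ <;>
    exact Submodule.smul_mem _ _ (Submodule.subset_span (by simp))

theorem fiberCoord_mem_pAlg (u : Fin 3 → ℝ) : fiberCoord u ∈ pAlg := by
  have h : fiberCoord u ∈ p1 := p1_eq_range ▸ LinearMap.mem_range_self _ u
  refine Submodule.span_mono ?_ h
  intro x hx
  simp only [Set.mem_insert_iff, Set.mem_singleton_iff] at hx ⊢
  tauto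

/-- The sum `𝔨 + 𝔭` is direct: this is what determines the otherwise arbitrary map `πp`
on `𝔤`. -/
theorem disjoint_kAlg_pAlg : Disjoint kAlg pAlg := by
  rw [Submodule.disjoint_def]
  intro Z hk hp
  obtain ⟨h1, h2⟩ := kAlg_components hk
  have h := pAlg_component_sum hp
  rw [h1, h2] at h
  have h0 : Z.1 = 0 := by
    have h3 : (3 : ℝ) • Z.1 = 0 := by rw [← h]; module
    exact (smul_eq_zero.1 h3).resolve_left (by norm_num)
  exact Prod.ext h0 (Prod.ext (h1.trans h0) (h2.trans h0))

theorem Dmap_fiberCoord (πk πp : T3 → T3)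
    (hdec : ∀ Z ∈ gAlg, πk Z ∈ kAlg ∧ πp Z ∈ pAlg ∧ πk Z + πp Z = Z) (u v : Fin 3 → ℝ) :
    Dmap πp (fiberCoord u) (fiberCoord v)
      = (Real.sqrt 12)⁻¹ • fiberCoord (crossProduct u v) := by
  set M := suCoord (crossProduct u v) with hM
  have hD : ((M, M, M) : T3) ∈ kAlg := diag_mem_kAlg _
  have hP := fiberCoord_mem_pAlg (crossProduct u v)
  have h12 : (Real.sqrt 12)⁻¹ * (Real.sqrt 12)⁻¹ = 1 / 12 := by
    rw [← mul_inv, Real.mul_self_sqrt (by norm_num)]; norm_num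
  have hK' := Submodule.smul_mem kAlg (-(1 / 3) : ℝ) hD
  have hP' := Submodule.smul_mem pAlg (2 * (Real.sqrt 12)⁻¹) hP
  -- `(M, 4M, M) = 2 (M, M, M) - (M, -2M, M)`
  have hsplit : (-(1 / 3) : ℝ) • ((M, M, M) : T3)
      + (2 * (Real.sqrt 12)⁻¹) • fiberCoord (crossProduct u v)
      = ⁅fiberCoord u, fiberCoord v⁆ := by
    rw [lie_fiberCoord, fiberCoord_apply, smul_smul, mul_assoc, h12, ← hM]
    refine Prod.ext ?_ (Prod.ext ?_ ?_) <;> simp only [Prod.smul_fst, Prod.smul_snd, Prod.fst_add, Prod.snd_add] <;> module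
  have hmem : ⁅fiberCoord u, fiberCoord v⁆ ∈ gAlg :=
    hsplit ▸ Submodule.add_mem_sup hK' hP'
  obtain ⟨hk, hp, hs⟩ := hdec _ hmem
  have hdiff : πp ⁅fiberCoord u, fiberCoord v⁆
      - (2 * (Real.sqrt 12)⁻¹) • fiberCoord (crossProduct u v) = 0 := by
    refine Submodule.disjoint_def.1 disjoint_kAlg_pAlg _ ?_ (sub_mem hp hP')
    have : πp ⁅fiberCoord u, fiberCoord v⁆
        - (2 * (Real.sqrt 12)⁻¹) • fiberCoord (crossProduct u v)
        = (-(1 / 3) : ℝ) • ((M, M, M) : T3) - πk ⁅fiberCoord u, fiberCoord v⁆ := by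
      rw [sub_eq_sub_iff_add_eq_add, add_comm, hs, hsplit]
    rw [this]
    exact sub_mem hK' hk
  rw [Dmap, sub_eq_zero.1 hdiff, smul_smul]
  congr 1
  ring

theorem no_plane_closed_under_cross (S : Submodule ℝ (Fin 3 → ℝ))
    (hS : Module.finrank ℝ S = 2)
    (hc : ∀ u ∈ S, ∀ v ∈ S, crossProduct u v ∈ S) : False := by
  let b := Module.finBasisOfFinrankEq ℝ S hS
  set u : Fin 3 → ℝ := (b 0).val with hu
  set v : Fin 3 → ℝ := (b 1).val with hv
  have hli : LinearIndependent ℝ ![u, v] := by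
    have h := b.linearIndependent.map' S.subtype S.ker_subtype
    have he : ![u, v] = S.subtype ∘ b := by
      ext i : 1
      fin_cases i <;> rfl
    rw [he]
    exact h
  have hne := crossProduct_ne_zero_iff_linearIndependent.2 hli
  have hw := hc u (b 0).2 v (b 1).2
  have hr := congrArg Subtype.val (b.sum_repr ⟨_, hw⟩)
  simp only [Fin.sum_univ_two, Submodule.coe_add, Submodule.coe_smul, ← hu, ← hv] at hr
  -- `u × v` lies in the plane and is orthogonal to it, hence to itself
  have h0 : crossProduct u v ⬝ᵥ crossProduct u v = 0 := by
    nth_rw 1 [← hr]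
    rw [add_dotProduct, smul_dotProduct, smul_dotProduct, dot_self_cross, dot_cross_self]
    simp
  exact hne (dotProduct_self_eq_zero.1 h0)

theorem no_plane_of_cross {V : Type*} [AddCommGroup V] [Module ℝ V]
    (f : (Fin 3 → ℝ) →ₗ[ℝ] V) (hf : Function.Injective f) (W : Submodule ℝ V)
    (hW : Module.finrank ℝ W = 2) (hle : W ≤ LinearMap.range f)
    (hc : ∀ u v, f u ∈ W → f v ∈ W → f (crossProduct u v) ∈ W) : False := by
  refine no_plane_closed_under_cross (W.comap f) ?_ fun u hu v hv => hc u v hu hv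
  rw [← hW, ← LinearEquiv.finrank_eq ((W.comap f).equivMapOfInjective f hf).symm,
    Submodule.map_comap_eq_of_le hle]

/-- There is no 2-dimensional `D`-invariant subspace of
`𝔭₁ = span{e₁,e₂,e₃}`; equivalently, `𝔰𝔲(2)` has no 2-dimensional Lie
subalgebra. Hence no totally geodesic 2-sphere inside the fiber `S³` of
`S³×S³ → S³` is `D`-invariant. -/
theorem no_two_dimensional_D_invariant_subspace_of_fiber
    (πk πp : T3 → T3)
    (hdec : ∀ Z ∈ gAlg, πk Z ∈ kAlg ∧ πp Z ∈ pAlg ∧ πk Z + πp Z = Z) :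
    (¬ ∃ w : Submodule ℝ T3, Module.finrank ℝ w = 2 ∧ w ≤ p1 ∧
      (∀ X ∈ w, ∀ Y ∈ w, Dmap πp X Y ∈ w)) ∧
    (¬ ∃ s : Submodule ℝ M2, Module.finrank ℝ s = 2 ∧ s ≤ su2 ∧
      (∀ X ∈ s, ∀ Y ∈ s, ⁅X, Y⁆ ∈ s)) := by
  constructor
  · rintro ⟨w, hw, hle, hD⟩
    refine no_plane_of_cross fiberCoord fiberCoord_injective w hw (p1_eq_range ▸ hle) ?_
    intro u v hu hv
    have h := hD _ hu _ hv
    rw [Dmap_fiberCoord πk πp hdec] at h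
    exact (w.smul_mem_iff (by positivity)).1 h
  · rintro ⟨s, hs, hle, hL⟩
    refine no_plane_of_cross suCoord suCoord_injective s hs (su2_eq_range ▸ hle) ?_
    intro u v hu hv
    have h := hL _ hu _ hv
    rw [lie_suCoord] at h
    exact (s.smul_mem_iff (by norm_num)).1 h

end
end
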